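/- arXiv:math/9904136 — 2 statements merged into one kernel-verified Lean document; each statement's English description precedes it below -/
import Mathlib

section
/- Let f : ℝ^d → ℝ^d be continuously differentiable, let p be a stable hyperbolic fixed point of ẋ = f(x), i.e. f(p) = 0 and all eigenvalues of Df(p) have strictly negative real part, and let x(t) be a solution of ẋ = f(x) with x(t) → p as t → ∞. Then the transition matrix Φ(t,s) of the variational equation ẏ = Df(x(t)) y along x(t) satisfies an exponential bound: there exist constants C > 0 and μ > 0 such that ‖Φ(t,s)‖ ≤ C e^{−μ(t−s)} for all t ≥ s ≥ 0. -/
open scoped Topology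
open Set Filter

/-!
Near `t = ∞` the equation is a small perturbation of the autonomous equation with coefficient
`L = lim B(t)`, so by Grönwall's inequality `Φ(s + T, s) → exp (T L)` as `s → ∞` for each
fixed `T`. If the spectrum of `L` lies in the open left half-plane, the spectral mapping theorem and
the Gelfand formula give a `T` with `‖exp (T L)‖ < 1`. From some time on, `Φ` therefore contracts
over every interval of length `T`, and the cocycle identity `Φ(t, r) Φ(r, s) = Φ(t, s)` iterates
this to exponential decay; the remaining bounded pieces of time only change the constant.
-/

lemma isUnit_of_isUnit_coe_centralizer {R A : Type*} [CommSemiring R] [Ring A] [Algebra R A]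
    {s : Set A} {x : Subalgebra.centralizer R s} (hx : IsUnit (x : A)) : IsUnit x := by
  obtain ⟨u, hu⟩ := hx
  have hinv : (↑u⁻¹ : A) ∈ Subalgebra.centralizer R s := fun y hy =>
    (show Commute y ↑u from hu ▸ x.2 y hy).units_inv_right
  exact isUnit_iff_exists.2
    ⟨⟨↑u⁻¹, hinv⟩, Subtype.ext (by simp [← hu]), Subtype.ext (by simp [← hu])⟩

section Spectrum

variable {𝔸 : Type*} [NormedRing 𝔸] [NormedAlgebra ℂ 𝔸] [CompleteSpace 𝔸]

theorem spectrum_exp (a : 𝔸) :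
    spectrum ℂ (NormedSpace.exp a) = Complex.exp '' spectrum ℂ a := by
  refine Subset.antisymm (fun z hz => ?_) ?_
  -- In the bicommutant of `a`, a commutative Banach algebra closed under inverses, every spectral
  -- value is the value of a character, and characters commute with `exp`.
  · let S := Subalgebra.centralizer ℂ (Subalgebra.centralizer ℂ {a} : Set 𝔸)
    have haS : a ∈ S := fun y hy => (hy a rfl).symm
    have hcomm : ∀ x y : S, x * y = y * x := fun x y => Subtype.ext <|
      Set.centralizer_centralizer_comm_of_comm (S := {a}) (by simp) x x.2 y y.2
    let _ : NormedCommRing S := { (inferInstance : NormedRing S) with mul_comm := hcomm }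
    have hclosed : IsClosed (S : Set 𝔸) := Set.isClosed_centralizer _
    have : CompleteSpace S := hclosed.completeSpace_coe
    let _ : NormedAlgebra ℚ 𝔸 := .restrictScalars ℚ ℂ 𝔸
    let _ : NormedAlgebra ℚ S := .restrictScalars ℚ ℂ S
    let b : S := ⟨a, haS⟩
    have hb : ((NormedSpace.exp b : S) : 𝔸) = NormedSpace.exp a :=
      NormedSpace.map_exp S.val continuous_subtype_val b
    obtain ⟨φ, rfl⟩ := WeakDual.CharacterSpace.mem_spectrum_iff_exists.1
      (spectrum.subset_subalgebra (NormedSpace.exp b) (hb ▸ hz))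
    refine ⟨φ b, fun hunit => ?_, ?_⟩
    · exact AlgHom.apply_mem_spectrum φ b (isUnit_of_isUnit_coe_centralizer hunit)
    · rw [Complex.exp_eq_exp_ℂ]
      exact (NormedSpace.map_exp φ (map_continuous φ) b).symm
  · rintro _ ⟨z, hz, rfl⟩
    rw [Complex.exp_eq_exp_ℂ]
    exact spectrum.exp_mem_exp a hz

theorem tendsto_pow_zero_of_spectralRadius_lt_one {a : 𝔸} (ha : spectralRadius ℂ a < 1) :
    Tendsto (fun n : ℕ => a ^ n) atTop (𝓝 0) := by
  obtain ⟨r, hr, hr_one⟩ := ENNReal.lt_iff_exists_nnreal_btwn.1 ha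
  have hpow : ∀ᶠ n : ℕ in atTop, ‖a ^ n‖₊ ≤ r ^ n := by
    have hgelfand := spectrum.pow_nnnorm_pow_one_div_tendsto_nhds_spectralRadius a
    filter_upwards [hgelfand.eventually_lt_const hr, eventually_ne_atTop 0] with n hn hn0
    rw [one_div, ENNReal.rpow_inv_lt_iff (by positivity), ENNReal.rpow_natCast] at hn
    exact_mod_cast hn.le
  exact squeeze_zero_norm' hpow
    (tendsto_pow_atTop_nhds_zero_of_lt_one r.2 (by exact_mod_cast hr_one))

theorem tendsto_exp_pow_zero_of_spectrum_re_neg {a : 𝔸} (ha : ∀ z ∈ spectrum ℂ a, z.re < 0) :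
    Tendsto (fun n : ℕ => NormedSpace.exp a ^ n) atTop (𝓝 0) := by
  cases subsingleton_or_nontrivial 𝔸
  · exact tendsto_const_nhds.congr fun _ => Subsingleton.elim _ _
  refine tendsto_pow_zero_of_spectralRadius_lt_one ?_
  refine mod_cast spectrum.spectralRadius_lt_of_forall_lt (r := 1) _ fun w hw => ?_
  obtain ⟨z, hz, rfl⟩ := (spectrum_exp a).subset hw
  rw [← NNReal.coe_lt_coe, coe_nnnorm, Complex.norm_exp]
  simpa using ha z hz

end Spectrum

theorem tendsto_exp_pow_zero_of_injective {𝔸 𝔹 : Type*} [NormedRing 𝔸] [NormedAlgebra ℝ 𝔸]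
    [FiniteDimensional ℝ 𝔸] [NormedRing 𝔹] [NormedAlgebra ℂ 𝔹] [CompleteSpace 𝔹]
    {ι : 𝔸 →ₐ[ℝ] 𝔹} (hι : Function.Injective ι) {a : 𝔸}
    (ha : ∀ z ∈ spectrum ℂ (ι a), z.re < 0) :
    Tendsto (fun n : ℕ => NormedSpace.exp a ^ n) atTop (𝓝 0) := by
  have hemb : Topology.IsClosedEmbedding ι :=
    LinearMap.isClosedEmbedding_of_injective (f := ι.toLinearMap) (LinearMap.ker_eq_bot.2 hι)
  have : CompleteSpace 𝔸 := FiniteDimensional.complete ℝ 𝔸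
  let _ : NormedAlgebra ℚ 𝔸 := .restrictScalars ℚ ℝ 𝔸
  let _ : NormedAlgebra ℚ 𝔹 := .restrictScalars ℚ ℂ 𝔹
  rw [hemb.tendsto_nhds_iff]
  have hexp : ι (NormedSpace.exp a) = NormedSpace.exp (ι a) :=
    NormedSpace.map_exp ι hemb.continuous a
  simpa [Function.comp_def, hexp] using tendsto_exp_pow_zero_of_spectrum_re_neg ha

theorem exists_norm_le_of_continuousOn_Ici_of_tendsto {E : Type*} [SeminormedAddCommGroup E]
    {u : ℝ → E} {l : E} {t₀ : ℝ} (hcont : ContinuousOn u (Ici t₀)) (hlim : Tendsto u atTop (𝓝 l)) :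
    ∃ M, ∀ t, t₀ ≤ t → ‖u t‖ ≤ M := by
  obtain ⟨R, hR⟩ := eventually_atTop.1 <| hlim.norm.eventually_le_const (lt_add_one ‖l‖)
  obtain ⟨M, hM⟩ := (isCompact_Icc (a := t₀) (b := R)).exists_bound_of_continuousOn
    (hcont.mono Icc_subset_Ici_self)
  refine ⟨max M (‖l‖ + 1), fun t ht => ?_⟩
  rcases le_total t R with htR | hRt
  · exact (hM t ⟨ht, htR⟩).trans (le_max_left _ _)
  · exact (hR t hRt).trans (le_max_right _ _)

/-- Uniform exponential stability on `[t₀, ∞)` of a two-parameter family `Φ t s`, the arguments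
being in the order final time, initial time. -/
def UniformlyExponentiallyStable {𝔸 : Type*} [Norm 𝔸] (t₀ : ℝ) (Φ : ℝ → ℝ → 𝔸) : Prop :=
  ∃ C > (0 : ℝ), ∃ μ > (0 : ℝ), ∀ s t : ℝ, t₀ ≤ s → s ≤ t →
    ‖Φ t s‖ ≤ C * Real.exp (-μ * (t - s))

section Transition

variable {𝔸 : Type*} [NormedRing 𝔸] [NormedAlgebra ℝ 𝔸]

/-- `Φ` is the transition (evolution) family on `[t₀, ∞)` of the linear equation `Y' = B(t) Y` in a
normed algebra; for operators, `Φ t s` maps the value of a solution at time `s` to its value at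
time `t`. Only times `t₀ ≤ s ≤ t` are constrained, with a one-sided derivative at `t = s`. -/
structure IsTransitionFamily (t₀ : ℝ) (B : ℝ → 𝔸) (Φ : ℝ → ℝ → 𝔸) : Prop where
  self_eq_one : ∀ s, t₀ ≤ s → Φ s s = 1
  hasDerivWithinAt : ∀ s t, t₀ ≤ s → s ≤ t →
    HasDerivWithinAt (fun τ => Φ τ s) (B t * Φ t s) (Ici s) t

theorem norm_le_gronwallBound_of_hasDerivWithinAt_mul_add {B Y g : ℝ → 𝔸} {s u M ε : ℝ}
    (hsu : s ≤ u) (hB : ∀ t ∈ Ico s u, ‖B t‖ ≤ M) (hg : ∀ t ∈ Ico s u, ‖g t‖ ≤ ε)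
    (hY : ∀ t ∈ Icc s u, HasDerivWithinAt Y (B t * Y t + g t) (Ici s) t) :
    ‖Y u‖ ≤ gronwallBound ‖Y s‖ M ε (u - s) := by
  refine norm_le_gronwallBound_of_norm_deriv_right_le
    (fun t ht => (hY t ht).continuousWithinAt.mono Icc_subset_Ici_self)
    (fun t ht => (hY t (Ico_subset_Icc_self ht)).mono (Ici_subset_Ici.2 ht.1)) le_rfl
    (fun t ht => ?_) u (right_mem_Icc.2 hsu)
  calc ‖B t * Y t + g t‖ ≤ ‖B t‖ * ‖Y t‖ + ‖g t‖ := norm_add_le_of_le (norm_mul_le _ _) le_rfl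
    _ ≤ M * ‖Y t‖ + ε := by gcongr <;> grind

theorem isTransitionFamily_exp [CompleteSpace 𝔸] (t₀ : ℝ) (A : 𝔸) :
    IsTransitionFamily t₀ (fun _ => A) (fun t s => NormedSpace.exp ((t - s) • A)) where
  self_eq_one s _ := by simp
  hasDerivWithinAt s t _ _ :=
    ((hasDerivAt_exp_smul_const' A (t - s)).comp_sub_const t s).hasDerivWithinAt

namespace IsTransitionFamily

variable {t₀ M : ℝ} {A B : ℝ → 𝔸} {Φ Ψ : ℝ → ℝ → 𝔸}

theorem mono {t₁ : ℝ} (hΦ : IsTransitionFamily t₀ B Φ) (h : t₀ ≤ t₁) :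
    IsTransitionFamily t₁ B Φ where
  self_eq_one s hs := hΦ.self_eq_one s (h.trans hs)
  hasDerivWithinAt s t hs := hΦ.hasDerivWithinAt s t (h.trans hs)

theorem norm_le (hΦ : IsTransitionFamily t₀ B Φ) (hB : ∀ t, t₀ ≤ t → ‖B t‖ ≤ M) {s t : ℝ}
    (hs : t₀ ≤ s) (hst : s ≤ t) : ‖Φ t s‖ ≤ ‖(1 : 𝔸)‖ * Real.exp (M * (t - s)) := by
  have hbound := norm_le_gronwallBound_of_hasDerivWithinAt_mul_add (g := 0) (ε := 0) hst
    (fun τ hτ => hB τ (hs.trans hτ.1)) (by simp)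
    (fun τ hτ => by simpa using hΦ.hasDerivWithinAt s τ hs hτ.1)
  rwa [gronwallBound_ε0, hΦ.self_eq_one s hs] at hbound

theorem norm_le_of_sub_le (hΦ : IsTransitionFamily t₀ B Φ) (hB : ∀ t, t₀ ≤ t → ‖B t‖ ≤ M)
    {μ T : ℝ} (hμ : 0 ≤ μ) {s t : ℝ} (hs : t₀ ≤ s) (hst : s ≤ t) (hT : t - s ≤ T) :
    ‖Φ t s‖ ≤ ‖(1 : 𝔸)‖ * Real.exp ((M + μ) * T) * Real.exp (-μ * (t - s)) := by
  have hM : 0 ≤ M := (norm_nonneg _).trans (hB t₀ le_rfl)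
  calc ‖Φ t s‖ ≤ ‖(1 : 𝔸)‖ * Real.exp (M * (t - s)) := hΦ.norm_le hB hs hst
    _ = ‖(1 : 𝔸)‖ * Real.exp ((M + μ) * (t - s)) * Real.exp (-μ * (t - s)) := by
      rw [mul_assoc, ← Real.exp_add]; ring_nf
    _ ≤ ‖(1 : 𝔸)‖ * Real.exp ((M + μ) * T) * Real.exp (-μ * (t - s)) := by gcongr

theorem mul_eq (hΦ : IsTransitionFamily t₀ B Φ) (hB : ∀ t, t₀ ≤ t → ‖B t‖ ≤ M) {s r t : ℝ}
    (hs : t₀ ≤ s) (hsr : s ≤ r) (hrt : r ≤ t) : Φ t r * Φ r s = Φ t s := by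
  have hr := hs.trans hsr
  have hbound := norm_le_gronwallBound_of_hasDerivWithinAt_mul_add (B := B)
    (Y := fun τ => Φ τ r * Φ r s - Φ τ s) (g := 0) (ε := 0) hrt
    (fun τ hτ => hB τ (hr.trans hτ.1)) (by simp)
    (fun τ hτ => by
      simpa [mul_sub, mul_assoc] using
        ((hΦ.hasDerivWithinAt r τ hr hτ.1).mul_const (Φ r s)).fun_sub
          ((hΦ.hasDerivWithinAt s τ hs (hsr.trans hτ.1)).mono (Ici_subset_Ici.2 hsr)))
  simpa [hΦ.self_eq_one r hr, gronwallBound_ε0_δ0, sub_eq_zero] using hbound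

theorem norm_sub_le_gronwallBound (hΦ : IsTransitionFamily t₀ B Φ) (hΨ : IsTransitionFamily t₀ A Ψ)
    (hB : ∀ t, t₀ ≤ t → ‖B t‖ ≤ M) (hA : ∀ t, t₀ ≤ t → ‖A t‖ ≤ M) {s T ε : ℝ} (hs : t₀ ≤ s)
    (hT : 0 ≤ T) (hε : ∀ t, s ≤ t → ‖B t - A t‖ ≤ ε) :
    ‖Φ (s + T) s - Ψ (s + T) s‖ ≤
      gronwallBound 0 M (ε * (‖(1 : 𝔸)‖ * Real.exp (M * T))) T := by
  have hM : 0 ≤ M := (norm_nonneg _).trans (hB t₀ le_rfl)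
  have hε0 : 0 ≤ ε := (norm_nonneg _).trans (hε s le_rfl)
  have hforcing : ∀ t ∈ Ico s (s + T),
      ‖(B t - A t) * Ψ t s‖ ≤ ε * (‖(1 : 𝔸)‖ * Real.exp (M * T)) := fun t ht =>
    calc ‖(B t - A t) * Ψ t s‖ ≤ ‖B t - A t‖ * ‖Ψ t s‖ := norm_mul_le _ _
      _ ≤ ε * (‖(1 : 𝔸)‖ * Real.exp (M * (t - s))) := by
        gcongr; exacts [hε t ht.1, hΨ.norm_le hA hs ht.1]
      _ ≤ ε * (‖(1 : 𝔸)‖ * Real.exp (M * T)) := by gcongr; linarith [ht.2]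
  have hbound := norm_le_gronwallBound_of_hasDerivWithinAt_mul_add
    (Y := fun t => Φ t s - Ψ t s) (le_add_of_nonneg_right hT)
    (fun t ht => hB t (hs.trans ht.1)) hforcing fun t ht => by
      refine ((hΦ.hasDerivWithinAt s t hs ht.1).fun_sub
        (hΨ.hasDerivWithinAt s t hs ht.1)).congr_deriv ?_
      noncomm_ring
  simpa [hΦ.self_eq_one s hs, hΨ.self_eq_one s hs] using hbound

theorem tendsto_sub_zero (hΦ : IsTransitionFamily t₀ B Φ) (hΨ : IsTransitionFamily t₀ A Ψ)
    (hB : ∀ t, t₀ ≤ t → ‖B t‖ ≤ M) (hA : ∀ t, t₀ ≤ t → ‖A t‖ ≤ M)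
    (hlim : Tendsto (fun t => B t - A t) atTop (𝓝 0)) {T : ℝ} (hT : 0 ≤ T) :
    Tendsto (fun s => Φ (s + T) s - Ψ (s + T) s) atTop (𝓝 0) := by
  have hgronwall : Tendsto (fun ε => gronwallBound 0 M (ε * (‖(1 : 𝔸)‖ * Real.exp (M * T))) T)
      (𝓝[>] 0) (𝓝 0) := by
    have hcont := (gronwallBound_continuous_ε 0 M T).comp
      (continuous_mul_const (‖(1 : 𝔸)‖ * Real.exp (M * T)))
    simpa [Function.comp_def, gronwallBound_ε0_δ0] using
      (hcont.tendsto 0).mono_left nhdsWithin_le_nhds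
  refine NormedAddGroup.tendsto_nhds_zero.2 fun δ hδ => ?_
  obtain ⟨ε, hεδ, hε⟩ := ((hgronwall.eventually_lt_const hδ).and self_mem_nhdsWithin).exists
  have hclose : ∀ᶠ s in atTop, ∀ t, s ≤ t → ‖B t - A t‖ ≤ ε :=
    eventually_forall_ge_atTop.2 (hlim.norm.eventually_le_const (by simpa using hε))
  filter_upwards [hclose, eventually_ge_atTop t₀] with s hs hts
  exact (hΦ.norm_sub_le_gronwallBound hΨ hB hA hts hT hs).trans_lt hεδ

theorem tendsto_exp [CompleteSpace 𝔸] (hΦ : IsTransitionFamily t₀ B Φ)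
    (hB : ∀ t, t₀ ≤ t → ‖B t‖ ≤ M) {L : 𝔸} (hlim : Tendsto B atTop (𝓝 L)) {T : ℝ} (hT : 0 ≤ T) :
    Tendsto (fun s => Φ (s + T) s) atTop (𝓝 (NormedSpace.exp (T • L))) := by
  have hL : ‖L‖ ≤ M := le_of_tendsto hlim.norm ((eventually_ge_atTop t₀).mono hB)
  simpa [tendsto_sub_nhds_zero_iff] using
    hΦ.tendsto_sub_zero (isTransitionFamily_exp t₀ L) hB (fun _ _ => hL)
      (tendsto_sub_nhds_zero_iff.2 hlim) hT

theorem norm_le_mul_pow_of_contraction (hΦ : IsTransitionFamily t₀ B Φ)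
    (hB : ∀ t, t₀ ≤ t → ‖B t‖ ≤ M) {T q : ℝ} (hT : 0 ≤ T)
    (hq : ∀ s, t₀ ≤ s → ‖Φ (s + T) s‖ ≤ q) {s : ℝ} (hs : t₀ ≤ s) (n : ℕ)
    {t : ℝ} (ht : s + n * T ≤ t) : ‖Φ t s‖ ≤ ‖Φ t (s + n * T)‖ * q ^ n := by
  have hq0 : 0 ≤ q := (norm_nonneg _).trans (hq s hs)
  induction n with
  | zero => simp
  | succ n ih =>
    set r := s + n * T
    have hr : t₀ ≤ r := le_add_of_le_of_nonneg hs (by positivity)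
    have hr' : s + (n + 1 : ℕ) * T = r + T := by push_cast; ring
    rw [hr'] at ht ⊢
    calc ‖Φ t s‖ ≤ ‖Φ t r‖ * q ^ n := ih (by linarith)
      _ = ‖Φ t (r + T) * Φ (r + T) r‖ * q ^ n := by
        rw [hΦ.mul_eq hB hr (by linarith) ht]
      _ ≤ ‖Φ t (r + T)‖ * q * q ^ n := by
        gcongr; exact norm_mul_le_of_le le_rfl (hq r hr)
      _ = ‖Φ t (r + T)‖ * q ^ (n + 1) := by ring

theorem uniformlyExponentiallyStable_of_contraction (hΦ : IsTransitionFamily t₀ B Φ)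
    (hB : ∀ t, t₀ ≤ t → ‖B t‖ ≤ M) {T μ : ℝ} (hT : 0 < T) (hμ : 0 < μ)
    (hcontr : ∀ s, t₀ ≤ s → ‖Φ (s + T) s‖ ≤ Real.exp (-μ * T)) :
    UniformlyExponentiallyStable t₀ Φ := by
  set K := ‖(1 : 𝔸)‖ * Real.exp ((M + μ) * T)
  refine ⟨K + 1, by positivity, μ, hμ, fun s t hs hst => ?_⟩
  set n := ⌊(t - s) / T⌋₊
  have hn : n * T ≤ t - s :=
    (le_div_iff₀ hT).1 (Nat.floor_le (div_nonneg (sub_nonneg.2 hst) hT.le))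
  have hn' : t - s < (n + 1) * T := (div_lt_iff₀ hT).1 (Nat.lt_floor_add_one _)
  have hsn : t₀ ≤ s + n * T := le_add_of_le_of_nonneg hs (by positivity)
  have hrest : ‖Φ t (s + n * T)‖ ≤ K * Real.exp (-μ * (t - (s + n * T))) :=
    hΦ.norm_le_of_sub_le hB hμ.le hsn (by linarith) (by linarith)
  calc ‖Φ t s‖ ≤ ‖Φ t (s + n * T)‖ * Real.exp (-μ * T) ^ n :=
        hΦ.norm_le_mul_pow_of_contraction hB hT.le hcontr hs n (by linarith)
    _ ≤ K * Real.exp (-μ * (t - (s + n * T))) * Real.exp (-μ * T) ^ n := by gcongr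
    _ = K * Real.exp (-μ * (t - s)) := by
      rw [← Real.exp_nat_mul, mul_assoc, ← Real.exp_add]; ring_nf
    _ ≤ (K + 1) * Real.exp (-μ * (t - s)) := by gcongr; linarith

theorem uniformlyExponentiallyStable_of_le (hΦ : IsTransitionFamily t₀ B Φ)
    (hB : ∀ t, t₀ ≤ t → ‖B t‖ ≤ M) {t₁ : ℝ} (ht : t₀ ≤ t₁)
    (hstable : UniformlyExponentiallyStable t₁ Φ) : UniformlyExponentiallyStable t₀ Φ := by
  obtain ⟨C, hC, μ, hμ, hdecay⟩ := hstable
  set K := ‖(1 : 𝔸)‖ * Real.exp ((M + μ) * (t₁ - t₀))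
  have hK : 0 ≤ K := by positivity
  have hCK : 0 ≤ C * K := by positivity
  refine ⟨K + C * K + 1, by positivity, μ, hμ, fun s t hs hst => ?_⟩
  set r := max s t₁
  have hsr : s ≤ r := le_max_left _ _
  have hrlen : r - s ≤ t₁ - t₀ :=
    sub_le_iff_le_add.2 (max_le (by linarith) (by linarith))
  rcases le_total t r with htr | hrt
  · calc ‖Φ t s‖ ≤ K * Real.exp (-μ * (t - s)) :=
          hΦ.norm_le_of_sub_le hB hμ.le hs hst (by linarith)
      _ ≤ (K + C * K + 1) * Real.exp (-μ * (t - s)) := by gcongr; linarith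
  · calc ‖Φ t s‖ = ‖Φ t r * Φ r s‖ := by rw [hΦ.mul_eq hB hs hsr hrt]
      _ ≤ C * Real.exp (-μ * (t - r)) * (K * Real.exp (-μ * (r - s))) :=
        norm_mul_le_of_le (hdecay r t (le_max_right _ _) hrt)
          (hΦ.norm_le_of_sub_le hB hμ.le hs hsr hrlen)
      _ = C * K * Real.exp (-μ * (t - s)) := by
        rw [mul_mul_mul_comm, ← Real.exp_add]; ring_nf
      _ ≤ (K + C * K + 1) * Real.exp (-μ * (t - s)) := by gcongr; linarith

theorem uniformlyExponentiallyStable_of_tendsto [CompleteSpace 𝔸] (hΦ : IsTransitionFamily t₀ B Φ)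
    (hB : ∀ t, t₀ ≤ t → ‖B t‖ ≤ M) {L : 𝔸} (hlim : Tendsto B atTop (𝓝 L))
    (hL : Tendsto (fun n : ℕ => NormedSpace.exp L ^ n) atTop (𝓝 0)) :
    UniformlyExponentiallyStable t₀ Φ := by
  let _ : NormedAlgebra ℚ 𝔸 := .restrictScalars ℚ ℝ 𝔸
  obtain ⟨n, hn, hn0⟩ := ((hL.norm.eventually_lt_const (by simp : ‖(0 : 𝔸)‖ < 1)).and
    (eventually_gt_atTop 0)).exists
  rw [← NormedSpace.exp_nsmul, ← Nat.cast_smul_eq_nsmul ℝ] at hn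
  have hT : 0 < (n : ℝ) := Nat.cast_pos.2 hn0
  obtain ⟨q, hLq, hq1⟩ := exists_between hn
  have hq0 : 0 < q := (norm_nonneg _).trans_lt hLq
  obtain ⟨t₁, ht₁⟩ := eventually_atTop.1 <|
    (hΦ.tendsto_exp hB hlim hT.le).norm.eventually_le_const hLq
  have hμ : 0 < -Real.log q / n := div_pos (neg_pos.2 (Real.log_neg hq0 hq1)) hT
  have hrate : Real.exp (-(-Real.log q / n) * n) = q := by
    rw [neg_div, neg_neg, div_mul_cancel₀ _ hT.ne', Real.exp_log hq0]
  have ht : t₀ ≤ max t₀ t₁ := le_max_left _ _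
  refine hΦ.uniformlyExponentiallyStable_of_le hB ht ?_
  refine (hΦ.mono ht).uniformlyExponentiallyStable_of_contraction
    (fun t h => hB t (ht.trans h)) hT hμ fun s hs => ?_
  rw [hrate]
  exact ht₁ s ((le_max_right _ _).trans hs)

end IsTransitionFamily

end Transition

open scoped Matrix.Norms.Operator in
theorem tendsto_exp_toEuclideanCLM_pow_zero {n : Type*} [Fintype n] [DecidableEq n]
    {A : Matrix n n ℝ} (hA : ∀ z ∈ spectrum ℂ (A.map (algebraMap ℝ ℂ)), z.re < 0) :
    Tendsto (fun k : ℕ => NormedSpace.exp (Matrix.toEuclideanCLM (𝕜 := ℝ) A) ^ k) atTop (𝓝 0) := by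
  let complexify : (EuclideanSpace ℝ n →L[ℝ] EuclideanSpace ℝ n) →ₐ[ℝ] Matrix n n ℂ :=
    Complex.ofRealAm.mapMatrix.comp (Matrix.toEuclideanCLM (n := n) (𝕜 := ℝ)).symm.toAlgEquiv
  have hinj : Function.Injective complexify :=
    (Matrix.map_injective Complex.ofReal_injective).comp
      (Matrix.toEuclideanCLM (n := n) (𝕜 := ℝ)).symm.injective
  refine tendsto_exp_pow_zero_of_injective hinj ?_
  have hcoe : complexify (Matrix.toEuclideanCLM (𝕜 := ℝ) A) = A.map (algebraMap ℝ ℂ) := by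
    simp [complexify]
  rwa [hcoe]

theorem stmt5_general {n : Type*} [Fintype n] [DecidableEq n] {t₀ : ℝ} {A : ℝ → Matrix n n ℝ}
    {L : Matrix n n ℝ} (hcont : ContinuousOn A (Ici t₀)) (hlim : Tendsto A atTop (𝓝 L))
    (hL : ∀ z ∈ spectrum ℂ (L.map (algebraMap ℝ ℂ)), z.re < 0)
    {Φ : ℝ → ℝ → EuclideanSpace ℝ n →L[ℝ] EuclideanSpace ℝ n}
    (hΦ : IsTransitionFamily t₀ (fun t => Matrix.toEuclideanCLM (𝕜 := ℝ) (A t)) Φ) :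
    UniformlyExponentiallyStable t₀ Φ := by
  have hCLM : Continuous (Matrix.toEuclideanCLM (n := n) (𝕜 := ℝ)) :=
    LinearMap.continuous_of_finiteDimensional
      (Matrix.toEuclideanCLM (n := n) (𝕜 := ℝ)).toAlgEquiv.toLinearMap
  have hlim_CLM := (hCLM.tendsto L).comp hlim
  obtain ⟨M, hM⟩ :=
    exists_norm_le_of_continuousOn_Ici_of_tendsto (hCLM.comp_continuousOn hcont) hlim_CLM
  exact hΦ.uniformlyExponentiallyStable_of_tendsto hM hlim_CLM
    (tendsto_exp_toEuclideanCLM_pow_zero hL)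

/-- Let `f` be `C¹` (with Jacobian matrix `Df`), let `p` be a stable
hyperbolic fixed point of `ẋ = f(x)` (`f(p) = 0`, all eigenvalues of `Df(p)` with
strictly negative real part), and let `x(t)` be a solution with `x(t) → p` as `t → ∞`.
Then the transition matrix `Φ(t,s)` of the variational equation `ẏ = Df(x(t)) y` along
`x` satisfies `‖Φ(t,s)‖ ≤ C e^{-μ(t-s)}` for all `t ≥ s ≥ 0`, for some `C, μ > 0`. -/
theorem stmt5 (d : ℕ)
    (f : EuclideanSpace ℝ (Fin d) → EuclideanSpace ℝ (Fin d))
    (Df : EuclideanSpace ℝ (Fin d) → Matrix (Fin d) (Fin d) ℝ)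
    (hDf : ∀ y, HasFDerivAt f (Matrix.toEuclideanCLM (𝕜 := ℝ) (Df y)) y)
    (hDf_cont : Continuous Df)
    (p : EuclideanSpace ℝ (Fin d))
    (hfp : f p = 0)
    (heig : ∀ μ ∈ spectrum ℂ ((Df p).map (algebraMap ℝ ℂ)), μ.re < 0)
    (x : ℝ → EuclideanSpace ℝ (Fin d))
    (hx : ∀ t : ℝ, 0 ≤ t → HasDerivAt x (f (x t)) t)
    (hx_lim : Tendsto x atTop (𝓝 p))
    (Φ : ℝ → ℝ → (EuclideanSpace ℝ (Fin d) →L[ℝ] EuclideanSpace ℝ (Fin d)))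
    (hΦ_init : ∀ s : ℝ, 0 ≤ s → Φ s s = ContinuousLinearMap.id ℝ _)
    (hΦ_ode : ∀ s : ℝ, 0 ≤ s → ∀ t : ℝ, 0 ≤ t →
      HasDerivAt (fun τ => Φ τ s)
        ((Matrix.toEuclideanCLM (𝕜 := ℝ) (Df (x t))).comp (Φ t s)) t) :
    ∃ C > (0 : ℝ), ∃ μ > (0 : ℝ), ∀ s t : ℝ, 0 ≤ s → s ≤ t →
      ‖Φ t s‖ ≤ C * Real.exp (-μ * (t - s)) :=
  stmt5_general (hDf_cont.comp_continuousOn fun t ht => (hx t ht).continuousAt.continuousWithinAt)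
    ((hDf_cont.tendsto p).comp hx_lim) heig
    ⟨hΦ_init, fun s t hs hst => (hΦ_ode s hs t (hs.trans hst)).hasDerivWithinAt⟩
end

section
/- Let f : ℝ^d → ℝ^d be continuously differentiable, let p be a stable hyperbolic fixed point of ẋ = f(x) (f(p) = 0 and all eigenvalues of Df(p) have strictly negative real part), and let x(t) solve ẋ = f(x) with x(t) → p as t → ∞. Then the conditioning function E(t) = ∫₀ᵗ ‖Φ(t,s)‖ ds of the trajectory x(t) is bounded by a constant: there exists M > 0 with E(t) ≤ M for all t ≥ 0. -/
open scoped Topology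
open Set Filter

/-!
By spectral mapping, the spectrum of `exp (Df p)` lies in the open unit disc, so Gelfand's formula
gives `exp (Df p) ^ n → 0` and hence `‖exp (t Df p)‖ ≤ K e^(-γ t)`. The variational equation along
`x` perturbs `ẏ = Df(p) y` by `Df(x(t)) - Df(p) → 0`. By variation of constants and Gronwall's
inequality, the perturbation costs at most a factor `exp (K ∫ₛᵗ ‖Df(x(τ)) - Df(p)‖ dτ)`, whose
exponent is at most `(γ / 2) (t - s) + const` because the integrand vanishes at infinity. So
`‖Φ(t,s)‖` still decays exponentially in `t - s`, uniformly in `s`, and its integral over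
`s ∈ [0, t]` is bounded.
-/

open NormedSpace (exp)

section SpectralMapping

theorem spectrum_centralizer_eq {R A : Type*} [CommRing R] [Ring A] [Algebra R A] (s : Set A)
    (x : Subalgebra.centralizer R s) : spectrum R x = spectrum R (x : A) := by
  refine Subset.antisymm (fun r hr hu => hr ?_) (spectrum.subset_subalgebra x)
  obtain ⟨u, hu⟩ := hu
  have hu_mem : (u : A) ∈ Subalgebra.centralizer R s :=
    hu ▸ (algebraMap R (Subalgebra.centralizer R s) r - x).2
  have hinv_mem : ((u⁻¹ : Aˣ) : A) ∈ Subalgebra.centralizer R s :=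
    (Subalgebra.mem_centralizer_iff R).2 fun y hy =>
      (Commute.units_inv_right ((Subalgebra.mem_centralizer_iff R).1 hu_mem y hy)).eq
  refine isUnit_iff_exists.2 ⟨⟨_, hinv_mem⟩, Subtype.ext ?_, Subtype.ext ?_⟩
  · exact (congrArg (· * _) hu.symm).trans u.mul_inv
  · exact (congrArg (_ * ·) hu.symm).trans u.inv_mul

theorem spectrum_exp_subset {A : Type*} [NormedRing A] [NormedAlgebra ℂ A] [CompleteSpace A]
    (a : A) : spectrum ℂ (exp a) ⊆ Complex.exp '' spectrum ℂ a := by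
  -- In the commutative bicommutant of `a`, spectra consist of character values, and characters
  -- commute with `exp`.
  let C : Subalgebra ℂ A := .centralizer ℂ (Set.centralizer {a})
  have hC_comm : ∀ x ∈ C, ∀ y ∈ C, x * y = y * x :=
    Set.centralizer_centralizer_comm_of_comm (by simp)
  let : NormedCommRing C :=
    { (inferInstance : NormedRing C) with mul_comm := fun x y => Subtype.ext (hC_comm x x.2 y y.2) }
  have : CompleteSpace C := (Set.isClosed_centralizer _).completeSpace_coe
  let +nondep : NormedAlgebra ℚ C := .restrictScalars ℚ ℂ C
  let +nondep : NormedAlgebra ℚ A := .restrictScalars ℚ ℂ A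
  let c : C := ⟨a, Set.subset_centralizer_centralizer rfl⟩
  have hexp : ((exp c : C) : A) = exp a := NormedSpace.map_exp C.val continuous_subtype_val c
  intro μ hμ
  rw [← hexp, ← spectrum_centralizer_eq] at hμ
  obtain ⟨φ, rfl⟩ := WeakDual.CharacterSpace.mem_spectrum_iff_exists.1 hμ
  refine ⟨φ c, ?_, ?_⟩
  · rw [← spectrum_centralizer_eq _ c]
    exact WeakDual.CharacterSpace.apply_mem_spectrum φ c
  · rw [Complex.exp_eq_exp_ℂ]
    exact (NormedSpace.map_exp φ (map_continuous φ) c).symm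

theorem tendsto_pow_of_spectralRadius_lt_one {A : Type*} [NormedRing A] [NormedAlgebra ℂ A]
    [CompleteSpace A] {a : A} (ha : spectralRadius ℂ a < 1) :
    Tendsto (fun n : ℕ => a ^ n) atTop (𝓝 0) := by
  obtain ⟨r, har, hr⟩ := ENNReal.lt_iff_exists_nnreal_btwn.1 ha
  have hr : (r : ℝ) < 1 := by exact_mod_cast hr
  refine squeeze_zero_norm' ?_ (tendsto_pow_atTop_nhds_zero_of_lt_one r.2 hr)
  have hgelfand := spectrum.pow_nnnorm_pow_one_div_tendsto_nhds_spectralRadius a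
  filter_upwards [hgelfand.eventually_lt_const har, eventually_gt_atTop 0] with n hn hn0
  have hn0 : (0 : ℝ) < n := Nat.cast_pos.2 hn0
  rw [one_div, ENNReal.rpow_inv_lt_iff hn0, ENNReal.rpow_natCast] at hn
  exact_mod_cast hn.le

theorem tendsto_exp_pow_of_spectrum_re_neg {A : Type*} [NormedRing A] [NormedAlgebra ℂ A]
    [CompleteSpace A] {a : A} (ha : ∀ μ ∈ spectrum ℂ a, μ.re < 0) :
    Tendsto (fun n : ℕ => exp a ^ n) atTop (𝓝 0) := by
  nontriviality A
  refine tendsto_pow_of_spectralRadius_lt_one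
    (spectrum.spectralRadius_lt_of_forall_lt (r := 1) _ fun l hl => ?_)
  obtain ⟨μ, hμ, rfl⟩ := spectrum_exp_subset a hl
  rw [← NNReal.coe_lt_coe, coe_nnnorm, Complex.norm_exp]
  exact Real.exp_lt_one_iff.2 (ha μ hμ)

end SpectralMapping

section RealMatrix

open scoped Matrix.Norms.L2Operator

variable {n : Type*} [Fintype n] [DecidableEq n]

theorem continuous_toEuclideanCLM : Continuous (Matrix.toEuclideanCLM (n := n) (𝕜 := ℝ)) :=
  (AddMonoidHomClass.isometry_of_norm _ Matrix.l2_opNorm_toEuclideanCLM).continuous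

theorem exp_toEuclideanCLM (M : Matrix n n ℝ) :
    exp (Matrix.toEuclideanCLM (𝕜 := ℝ) M) = Matrix.toEuclideanCLM (𝕜 := ℝ) (exp M) := by
  let +nondep : NormedAlgebra ℚ (Matrix n n ℝ) := .restrictScalars ℚ ℝ _
  let +nondep : NormedAlgebra ℚ (EuclideanSpace ℝ n →L[ℝ] EuclideanSpace ℝ n) :=
    .restrictScalars ℚ ℝ _
  exact (NormedSpace.map_exp (Matrix.toEuclideanCLM (𝕜 := ℝ)) continuous_toEuclideanCLM M).symm

theorem map_ofReal_exp (M : Matrix n n ℝ) :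
    (exp M).map (algebraMap ℝ ℂ) = exp (M.map (algebraMap ℝ ℂ)) := by
  let +nondep : NormedAlgebra ℚ (Matrix n n ℝ) := .restrictScalars ℚ ℝ _
  let +nondep : NormedAlgebra ℚ (Matrix n n ℂ) := .restrictScalars ℚ ℂ _
  exact NormedSpace.map_exp (algebraMap ℝ ℂ).mapMatrix
    (continuous_id.matrix_map Complex.continuous_ofReal) M

theorem tendsto_exp_toEuclideanCLM_pow {M : Matrix n n ℝ}
    (hM : ∀ μ ∈ spectrum ℂ (M.map (algebraMap ℝ ℂ)), μ.re < 0) :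
    Tendsto (fun k : ℕ => exp (Matrix.toEuclideanCLM (𝕜 := ℝ) M) ^ k) atTop (𝓝 0) := by
  have hre : Continuous fun N : Matrix n n ℂ => N.map Complex.re :=
    continuous_id.matrix_map Complex.continuous_re
  have hre_pow (k : ℕ) : (exp (M.map (algebraMap ℝ ℂ)) ^ k).map Complex.re = exp M ^ k := by
    rw [← map_ofReal_exp, ← Matrix.map_pow, Matrix.map_map]
    exact Matrix.map_id _
  have hlim : Tendsto (fun k : ℕ => exp M ^ k) atTop (𝓝 0) := by
    have h := ((hre.tendsto 0).comp (tendsto_exp_pow_of_spectrum_re_neg hM)).congr hre_pow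
    rwa [Matrix.map_zero _ Complex.zero_re] at h
  have h := (continuous_toEuclideanCLM.tendsto 0).comp hlim
  rw [map_zero] at h
  exact h.congr fun k => by rw [exp_toEuclideanCLM, ← map_pow]; rfl

end RealMatrix

section SemigroupDecay

theorem norm_mul_pow_le {R : Type*} [SeminormedRing R] (x y : R) (n : ℕ) :
    ‖x * y ^ n‖ ≤ ‖x‖ * ‖y‖ ^ n := by
  induction n with
  | zero => simp
  | succ n ih =>
    calc ‖x * y ^ (n + 1)‖ = ‖x * y ^ n * y‖ := by rw [pow_succ, mul_assoc]
      _ ≤ ‖x * y ^ n‖ * ‖y‖ := norm_mul_le _ _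
      _ ≤ ‖x‖ * ‖y‖ ^ n * ‖y‖ := by gcongr
      _ = ‖x‖ * ‖y‖ ^ (n + 1) := by rw [pow_succ, mul_assoc]

variable {𝔸 : Type*} [NormedRing 𝔸] [NormedAlgebra ℝ 𝔸] [CompleteSpace 𝔸]

theorem continuous_exp_smul (a : 𝔸) : Continuous fun t : ℝ => exp (t • a) :=
  continuous_iff_continuousAt.2 fun t => (hasDerivAt_exp_smul_const (𝕂 := ℝ) a t).continuousAt

theorem exp_add_smul (a : 𝔸) (s t : ℝ) : exp ((s + t) • a) = exp (s • a) * exp (t • a) := by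
  let +nondep : NormedAlgebra ℚ 𝔸 := .restrictScalars ℚ ℝ 𝔸
  rw [add_smul, NormedSpace.exp_add_of_commute (((Commute.refl a).smul_left s).smul_right t)]

theorem exp_natCast_mul_smul (a : 𝔸) (n : ℕ) (t : ℝ) :
    exp ((n * t) • a) = exp (t • a) ^ n := by
  let +nondep : NormedAlgebra ℚ 𝔸 := .restrictScalars ℚ ℝ 𝔸
  rw [mul_smul, Nat.cast_smul_eq_nsmul, NormedSpace.exp_nsmul]

theorem exists_norm_exp_smul_le_of_norm_lt_one {a : 𝔸} {T : ℝ} (hT : 0 < T)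
    (ha : ‖exp (T • a)‖ < 1) :
    ∃ K > 0, ∃ γ > 0, ∀ t : ℝ, 0 ≤ t → ‖exp (t • a)‖ ≤ K * Real.exp (-γ * t) := by
  obtain ⟨q, haq, hq1⟩ := exists_between ha
  have hq0 : 0 < q := (norm_nonneg _).trans_lt haq
  obtain ⟨B, hB⟩ := isCompact_Icc.exists_bound_of_continuousOn
    (s := Icc 0 T) (continuous_exp_smul a).continuousOn
  have hB0 : 0 ≤ B := (norm_nonneg _).trans (hB 0 (left_mem_Icc.2 hT.le))
  have hlog : Real.log q < 0 := Real.log_neg hq0 hq1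
  refine ⟨(B + 1) / q, by positivity, -Real.log q / T, div_pos (neg_pos.2 hlog) hT, fun t ht => ?_⟩
  have hfloor : (⌊t / T⌋₊ : ℝ) ≤ t / T := Nat.floor_le (by positivity)
  have hfloor' : t / T < ⌊t / T⌋₊ + 1 := Nat.lt_floor_add_one _
  set m := ⌊t / T⌋₊
  have hrem : t - m * T ∈ Icc 0 T := by
    rw [le_div_iff₀ hT] at hfloor
    rw [div_lt_iff₀ hT] at hfloor'
    constructor <;> linarith
  have hpow : q ^ (m + 1) ≤ Real.exp (-(-Real.log q / T) * t) := by
    rw [← Real.exp_log (pow_pos hq0 _), Real.log_pow, Real.exp_le_exp]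
    push_cast
    calc ((m : ℝ) + 1) * Real.log q ≤ t / T * Real.log q :=
          mul_le_mul_of_nonpos_right hfloor'.le hlog.le
      _ = -(-Real.log q / T) * t := by ring
  calc ‖exp (t • a)‖ = ‖exp ((t - m * T) • a) * exp (T • a) ^ m‖ := by
        rw [← exp_natCast_mul_smul, ← exp_add_smul, sub_add_cancel]
    _ ≤ ‖exp ((t - m * T) • a)‖ * ‖exp (T • a)‖ ^ m := norm_mul_pow_le _ _ _
    _ ≤ (B + 1) * q ^ m := by gcongr; exact (hB _ hrem).trans (by linarith)
    _ = (B + 1) / q * q ^ (m + 1) := by field_simp; ring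
    _ ≤ _ := by gcongr

theorem exists_norm_exp_smul_le_of_tendsto_pow {a : 𝔸}
    (ha : Tendsto (fun n : ℕ => exp a ^ n) atTop (𝓝 0)) :
    ∃ K > 0, ∃ γ > 0, ∀ t : ℝ, 0 ≤ t → ‖exp (t • a)‖ ≤ K * Real.exp (-γ * t) := by
  obtain ⟨n, hn, hn0⟩ :=
    ((tendsto_zero_iff_norm_tendsto_zero.1 ha).eventually_lt_const one_pos).and
      (eventually_gt_atTop 0) |>.exists
  refine exists_norm_exp_smul_le_of_norm_lt_one (Nat.cast_pos.2 hn0) ?_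
  rwa [← mul_one (n : ℝ), exp_natCast_mul_smul, one_smul]

end SemigroupDecay

section Gronwall

variable {s t : ℝ}

theorem hasDerivAt_primitive_of_mem_Ioo {E : Type*} [NormedAddCommGroup E] [NormedSpace ℝ E]
    [CompleteSpace E] {φ : ℝ → E} (hφ : ContinuousOn φ (Icc s t)) {r : ℝ} (hr : r ∈ Ioo s t) :
    HasDerivAt (fun r => ∫ τ in s..r, φ τ) (φ r) r :=
  intervalIntegral.integral_hasDerivAt_right
    ((hφ.mono (Icc_subset_Icc_right hr.2.le)).intervalIntegrable_of_Icc hr.1.le)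
    ((hφ.mono Ioo_subset_Icc_self).stronglyMeasurableAtFilter isOpen_Ioo r hr)
    (hφ.continuousAt (Icc_mem_nhds hr.1 hr.2))

theorem le_mul_exp_integral_of_le_add_integral {C : ℝ} {u g : ℝ → ℝ} (hst : s ≤ t)
    (hu : ContinuousOn u (Icc s t)) (hg : ContinuousOn g (Icc s t)) (hg0 : ∀ r ∈ Icc s t, 0 ≤ g r)
    (h : ∀ r ∈ Icc s t, u r ≤ C + ∫ τ in s..r, g τ * u τ) :
    u t ≤ C * Real.exp (∫ τ in s..t, g τ) := by
  have hcont {φ : ℝ → ℝ} (hφ : ContinuousOn φ (Icc s t)) :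
      ContinuousOn (fun r => ∫ τ in s..r, φ τ) (Icc s t) := by
    rw [← uIcc_of_le hst] at hφ ⊢
    exact intervalIntegral.continuousOn_primitive_interval (hφ.integrableOn_compact isCompact_uIcc)
  set U : ℝ → ℝ := fun r => C + ∫ τ in s..r, g τ * u τ
  set G : ℝ → ℝ := fun r => ∫ τ in s..r, g τ
  have hderiv (r) (hr : r ∈ interior (Icc s t)) : HasDerivAt (fun r => U r * Real.exp (-G r))
      (g r * (u r - U r) * Real.exp (-G r)) r := by
    rw [interior_Icc] at hr
    have hU' : HasDerivAt U (g r * u r) r :=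
      (hasDerivAt_primitive_of_mem_Ioo (hg.mul hu) hr).const_add C
    have hG' : HasDerivAt (fun r => -G r) (-g r) r := (hasDerivAt_primitive_of_mem_Ioo hg hr).neg
    exact (hU'.mul hG'.exp).congr_deriv (by ring)
  have hanti : AntitoneOn (fun r => U r * Real.exp (-G r)) (Icc s t) := by
    refine antitoneOn_of_deriv_nonpos (convex_Icc s t)
      ((continuousOn_const.add (hcont (hg.mul hu))).mul (hcont hg).neg.rexp)
      (fun r hr => (hderiv r hr).differentiableAt.differentiableWithinAt) fun r hr => ?_
    have hr' := interior_subset hr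
    rw [(hderiv r hr).deriv]
    exact mul_nonpos_of_nonpos_of_nonneg
      (mul_nonpos_of_nonneg_of_nonpos (hg0 r hr') (sub_nonpos.2 (h r hr'))) (Real.exp_nonneg _)
  have hUt : U t * Real.exp (-G t) ≤ C := by
    simpa [U, G] using hanti (left_mem_Icc.2 hst) (right_mem_Icc.2 hst) hst
  calc u t ≤ U t := h t (right_mem_Icc.2 hst)
    _ = U t * Real.exp (-G t) * Real.exp (G t) := by
      rw [mul_assoc, ← Real.exp_add, neg_add_cancel, Real.exp_zero, mul_one]
    _ ≤ C * Real.exp (G t) := by gcongr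

end Gronwall

section VariationOfConstants

variable {𝔸 : Type*} [NormedRing 𝔸] [NormedAlgebra ℝ 𝔸] [CompleteSpace 𝔸] {a : 𝔸} {b y : ℝ → 𝔸}
  {s t : ℝ}

theorem eq_exp_smul_mul_add_integral (a : 𝔸) (hb : ContinuousOn b (uIcc s t))
    (hy : ∀ τ ∈ uIcc s t, HasDerivAt y (b τ * y τ) τ) :
    y t = exp ((t - s) • a) * y s + ∫ τ in s..t, exp ((t - τ) • a) * ((b τ - a) * y τ) := by
  have hexp (τ : ℝ) : HasDerivAt (fun τ => exp ((t - τ) • a)) (-(exp ((t - τ) • a) * a)) τ :=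
    ((hasDerivAt_exp_smul_const (𝕂 := ℝ) a (t - τ)).scomp τ
      ((hasDerivAt_id τ).const_sub t)).congr_deriv (neg_one_smul ℝ _)
  have hderiv (τ) (hτ : τ ∈ uIcc s t) : HasDerivAt (fun τ => exp ((t - τ) • a) * y τ)
      (exp ((t - τ) • a) * ((b τ - a) * y τ)) τ :=
    ((hexp τ).mul (hy τ hτ)).congr_deriv (by noncomm_ring)
  have hcont : ContinuousOn (fun τ => exp ((t - τ) • a) * ((b τ - a) * y τ)) (uIcc s t) := by
    refine .mul (fun τ _ => (hexp τ).continuousAt.continuousWithinAt) (.mul (by fun_prop) ?_)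
    exact fun τ hτ => (hy τ hτ).continuousAt.continuousWithinAt
  rw [intervalIntegral.integral_eq_sub_of_hasDerivAt hderiv hcont.intervalIntegrable]
  simp

-- The weight `exp (γ * (t - s))` cancels the decay of the kernel in the variation-of-constants
-- formula, which gives the inequality the form Gronwall's lemma needs.
theorem exp_mul_norm_le_add_integral {K γ : ℝ}
    (ha : ∀ τ : ℝ, 0 ≤ τ → ‖exp (τ • a)‖ ≤ K * Real.exp (-γ * τ)) (hst : s ≤ t)
    (hb : ContinuousOn b (Icc s t)) (hy : ∀ τ ∈ Icc s t, HasDerivAt y (b τ * y τ) τ) :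
    Real.exp (γ * (t - s)) * ‖y t‖ ≤
      K * ‖y s‖ + ∫ τ in s..t, K * ‖b τ - a‖ * (Real.exp (γ * (τ - s)) * ‖y τ‖) := by
  have hdecay (τ) (hτ : τ ≤ t) (z : 𝔸) : ‖Real.exp (γ * (t - s)) • (exp ((t - τ) • a) * z)‖ ≤
      K * Real.exp (γ * (τ - s)) * ‖z‖ := by
    rw [norm_smul, Real.norm_of_nonneg (Real.exp_nonneg _)]
    calc Real.exp (γ * (t - s)) * ‖exp ((t - τ) • a) * z‖
        ≤ Real.exp (γ * (t - s)) * (K * Real.exp (-γ * (t - τ)) * ‖z‖) := by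
          gcongr
          exact norm_mul_le_of_le (ha _ (sub_nonneg.2 hτ)) le_rfl
      _ = K * (Real.exp (γ * (t - s)) * Real.exp (-γ * (t - τ))) * ‖z‖ := by ring
      _ = K * Real.exp (γ * (τ - s)) * ‖z‖ := by rw [← Real.exp_add]; ring_nf
  have hy_cont : ContinuousOn y (Icc s t) :=
    fun τ hτ => (hy τ hτ).continuousAt.continuousWithinAt
  have hcont : ContinuousOn
      (fun τ => K * ‖b τ - a‖ * (Real.exp (γ * (τ - s)) * ‖y τ‖)) (Icc s t) := by fun_prop
  calc Real.exp (γ * (t - s)) * ‖y t‖ = ‖Real.exp (γ * (t - s)) • y t‖ := by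
        rw [norm_smul, Real.norm_of_nonneg (Real.exp_nonneg _)]
    _ = ‖Real.exp (γ * (t - s)) • (exp ((t - s) • a) * y s) +
          ∫ τ in s..t, Real.exp (γ * (t - s)) • (exp ((t - τ) • a) * ((b τ - a) * y τ))‖ := by
        rw [← uIcc_of_le hst] at hb hy
        rw [intervalIntegral.integral_smul, ← smul_add, ← eq_exp_smul_mul_add_integral a hb hy]
    _ ≤ _ := by
        refine norm_add_le_of_le ((hdecay s hst _).trans_eq (by simp)) ?_
        refine intervalIntegral.norm_integral_le_of_norm_le hst (.of_forall fun τ hτ => ?_)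
          (hcont.intervalIntegrable_of_Icc hst)
        have hK : 0 ≤ K := by simpa using (norm_nonneg _).trans (ha 0 le_rfl)
        calc _ ≤ K * Real.exp (γ * (τ - s)) * ‖(b τ - a) * y τ‖ := hdecay τ hτ.2 _
          _ ≤ K * Real.exp (γ * (τ - s)) * (‖b τ - a‖ * ‖y τ‖) := by gcongr; exact norm_mul_le _ _
          _ = _ := by ring

theorem norm_le_exp_integral_mul_norm {K γ : ℝ}
    (ha : ∀ τ : ℝ, 0 ≤ τ → ‖exp (τ • a)‖ ≤ K * Real.exp (-γ * τ)) (hst : s ≤ t)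
    (hb : ContinuousOn b (Icc s t)) (hy : ∀ τ ∈ Icc s t, HasDerivAt y (b τ * y τ) τ) :
    ‖y t‖ ≤ K * Real.exp (-γ * (t - s) + K * ∫ τ in s..t, ‖b τ - a‖) * ‖y s‖ := by
  have hK : 0 ≤ K := by simpa using (norm_nonneg _).trans (ha 0 le_rfl)
  have hy_cont : ContinuousOn y (Icc s t) :=
    fun τ hτ => (hy τ hτ).continuousAt.continuousWithinAt
  have hgronwall : Real.exp (γ * (t - s)) * ‖y t‖ ≤
      K * ‖y s‖ * Real.exp (∫ τ in s..t, K * ‖b τ - a‖) := by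
    refine le_mul_exp_integral_of_le_add_integral
      (u := fun τ => Real.exp (γ * (τ - s)) * ‖y τ‖) hst (by fun_prop) (by fun_prop)
      (fun _ _ => by positivity) fun r hr => ?_
    have hsub : Icc s r ⊆ Icc s t := Icc_subset_Icc_right hr.2
    exact exp_mul_norm_le_add_integral ha hr.1 (hb.mono hsub) fun τ hτ => hy τ (hsub hτ)
  rw [intervalIntegral.integral_const_mul] at hgronwall
  calc ‖y t‖ = Real.exp (-γ * (t - s)) * (Real.exp (γ * (t - s)) * ‖y t‖) := by
        rw [← mul_assoc, ← Real.exp_add]; simp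
    _ ≤ Real.exp (-γ * (t - s)) * (K * ‖y s‖ * Real.exp (K * ∫ τ in s..t, ‖b τ - a‖)) := by gcongr
    _ = _ := by rw [Real.exp_add]; ring

end VariationOfConstants

section IntegralBounds

theorem exists_integral_le_mul_add {g : ℝ → ℝ} (hg : ContinuousOn g (Ici 0))
    (hlim : Tendsto g atTop (𝓝 0)) {ε : ℝ} (hε : 0 < ε) :
    ∃ D, ∀ s t, 0 ≤ s → s ≤ t → ∫ τ in s..t, g τ ≤ ε * (t - s) + D := by
  obtain ⟨T, hT0, hT⟩ := (atTop_basis' 0).eventually_iff.1 (hlim.eventually_le_const hε)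
  set e : ℝ → ℝ := fun τ => max (g τ - ε) 0
  have hk_int {k : ℝ → ℝ} (hk : ContinuousOn k (Ici 0)) {s t : ℝ} (hs : 0 ≤ s) (hst : s ≤ t) :
      IntervalIntegrable k MeasureTheory.volume s t :=
    (hk.mono (Icc_subset_Ici_self.trans (Ici_subset_Ici.2 hs))).intervalIntegrable_of_Icc hst
  have he : ContinuousOn e (Ici 0) := (hg.sub continuousOn_const).sup continuousOn_const
  refine ⟨∫ τ in 0..T, e τ, fun s t hs hst => ?_⟩
  have htail : ∫ τ in T..max t T, e τ = 0 := by
    refine intervalIntegral.integral_zero_ae (.of_forall fun τ hτ => ?_)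
    rw [uIoc_of_le (le_max_right t T)] at hτ
    exact max_eq_right (sub_nonpos.2 (hT hτ.1.le))
  calc ∫ τ in s..t, g τ ≤ ∫ τ in s..t, (ε + e τ) :=
        intervalIntegral.integral_mono_on hst (hk_int hg hs hst)
          (hk_int (continuousOn_const.add he) hs hst)
          fun τ _ => sub_le_iff_le_add'.1 (le_max_left _ _)
    _ = ε * (t - s) + ∫ τ in s..t, e τ := by
        rw [intervalIntegral.integral_add intervalIntegrable_const (hk_int he hs hst),
          intervalIntegral.integral_const, smul_eq_mul, mul_comm]
    _ ≤ ε * (t - s) + ∫ τ in 0..max t T, e τ := by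
        gcongr
        exact intervalIntegral.integral_mono_interval hs hst (le_max_left t T)
          (.of_forall fun τ => le_max_right _ _) (hk_int he le_rfl (hT0.trans (le_max_right t T)))
    _ = ε * (t - s) + ∫ τ in 0..T, e τ := by
        rw [← intervalIntegral.integral_add_adjacent_intervals (hk_int he le_rfl hT0)
          (hk_int he hT0 (le_max_right t T)), htail, add_zero]

theorem integral_exp_neg_mul_sub_le {γ : ℝ} (hγ : 0 < γ) (t : ℝ) :
    ∫ s in (0 : ℝ)..t, Real.exp (-γ * (t - s)) ≤ 1 / γ := by
  have h : ∫ s in (0 : ℝ)..t, Real.exp (-γ * (t - s)) = (1 - Real.exp (-γ * t)) / γ := by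
    rw [intervalIntegral.integral_comp_sub_left (fun s => Real.exp (-γ * s)),
      intervalIntegral.integral_comp_mul_left _ (neg_ne_zero.2 hγ.ne'), integral_exp]
    simp only [smul_eq_mul, sub_self, sub_zero, mul_zero, Real.exp_zero]
    ring
  rw [h]
  gcongr
  linarith [Real.exp_pos (-γ * t)]

end IntegralBounds

theorem exists_norm_solution_le_mul_exp {𝔸 : Type*} [NormedRing 𝔸] [NormedAlgebra ℝ 𝔸]
    [CompleteSpace 𝔸] {a : 𝔸} {b : ℝ → 𝔸}
    (ha : Tendsto (fun n : ℕ => exp a ^ n) atTop (𝓝 0)) (hb : ContinuousOn b (Ici 0))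
    (hlim : Tendsto b atTop (𝓝 a)) :
    ∃ K > 0, ∃ γ > 0, ∀ (y : ℝ → 𝔸) (s t : ℝ), 0 ≤ s → s ≤ t →
      (∀ τ ∈ Icc s t, HasDerivAt y (b τ * y τ) τ) →
      ‖y t‖ ≤ K * Real.exp (-γ * (t - s)) * ‖y s‖ := by
  obtain ⟨K, hK, γ, hγ, hexp⟩ := exists_norm_exp_smul_le_of_tendsto_pow ha
  obtain ⟨D, hD⟩ : ∃ D, ∀ s t, 0 ≤ s → s ≤ t →
      ∫ τ in s..t, ‖b τ - a‖ ≤ γ / (2 * K) * (t - s) + D :=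
    exists_integral_le_mul_add (hb.sub continuousOn_const).norm
      (tendsto_iff_norm_sub_tendsto_zero.1 hlim) (by positivity)
  refine ⟨K * Real.exp (K * D), by positivity, γ / 2, by positivity, fun y s t hs hst hy => ?_⟩
  have hsub : Icc s t ⊆ Ici 0 := Icc_subset_Ici_self.trans (Ici_subset_Ici.2 hs)
  calc ‖y t‖ ≤ K * Real.exp (-γ * (t - s) + K * ∫ τ in s..t, ‖b τ - a‖) * ‖y s‖ :=
        norm_le_exp_integral_mul_norm hexp hst (hb.mono hsub) hy
    _ ≤ K * Real.exp (-γ * (t - s) + K * (γ / (2 * K) * (t - s) + D)) * ‖y s‖ := by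
        gcongr
        exact hD s t hs hst
    _ = K * Real.exp (K * D + -(γ / 2) * (t - s)) * ‖y s‖ := by
        congr 3
        field_simp
        ring
    _ = K * Real.exp (K * D) * Real.exp (-(γ / 2) * (t - s)) * ‖y s‖ := by
        rw [Real.exp_add, ← mul_assoc K]

theorem stmt6_general {𝔸 : Type*} [NormedRing 𝔸] [NormedAlgebra ℝ 𝔸] [CompleteSpace 𝔸]
    {a : 𝔸} {b : ℝ → 𝔸} (ha : Tendsto (fun n : ℕ => exp a ^ n) atTop (𝓝 0))
    (hb : ContinuousOn b (Ici 0)) (hlim : Tendsto b atTop (𝓝 a)) {Φ : ℝ → ℝ → 𝔸}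
    (hΦ_init : ∀ s, 0 ≤ s → Φ s s = 1)
    (hΦ_ode : ∀ s t, 0 ≤ s → s ≤ t → HasDerivAt (fun τ => Φ τ s) (b t * Φ t s) t) :
    ∃ M > (0 : ℝ), ∀ t, 0 ≤ t → ∫ s in 0..t, ‖Φ t s‖ ≤ M := by
  obtain ⟨K, hK, γ, hγ, hdecay⟩ := exists_norm_solution_le_mul_exp ha hb hlim
  have hΦ (s t) (hs : 0 ≤ s) (hst : s ≤ t) :
      ‖Φ t s‖ ≤ K * ‖(1 : 𝔸)‖ * Real.exp (-γ * (t - s)) := by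
    have := hdecay (Φ · s) s t hs hst fun τ hτ => hΦ_ode s τ hs hτ.1
    rwa [hΦ_init s hs, mul_right_comm] at this
  refine ⟨K * ‖(1 : 𝔸)‖ * (1 / γ) + 1, by positivity, fun t ht => ?_⟩
  have hcont : Continuous fun s => K * ‖(1 : 𝔸)‖ * Real.exp (-γ * (t - s)) := by fun_prop
  calc ∫ s in 0..t, ‖Φ t s‖ ≤ ‖∫ s in 0..t, ‖Φ t s‖‖ := Real.le_norm_self _
    _ ≤ ∫ s in 0..t, K * ‖(1 : 𝔸)‖ * Real.exp (-γ * (t - s)) :=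
        intervalIntegral.norm_integral_le_of_norm_le ht
          (.of_forall fun s hs => by simpa using hΦ s t hs.1.le hs.2)
          (hcont.intervalIntegrable 0 t)
    _ = K * ‖(1 : 𝔸)‖ * ∫ s in 0..t, Real.exp (-γ * (t - s)) :=
        intervalIntegral.integral_const_mul _ _
    _ ≤ K * ‖(1 : 𝔸)‖ * (1 / γ) := by
        gcongr
        exact integral_exp_neg_mul_sub_le hγ t
    _ ≤ _ := le_add_of_nonneg_right zero_le_one

/-- Let `f` be `C¹` (with Jacobian matrix `Df`), let `p` be a stable
hyperbolic fixed point of `ẋ = f(x)` (`f(p) = 0`, all eigenvalues of `Df(p)` with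
strictly negative real part), and let `x(t)` be a solution with `x(t) → p` as `t → ∞`.
Then the conditioning function `E(t) = ∫₀ᵗ ‖Φ(t,s)‖ ds` of the trajectory `x`, where
`Φ` is the transition matrix of the variational equation `ẏ = Df(x(t)) y` along `x`,
is bounded by a constant `M > 0` for all `t ≥ 0`. -/
theorem stmt6 (d : ℕ)
    (f : EuclideanSpace ℝ (Fin d) → EuclideanSpace ℝ (Fin d))
    (Df : EuclideanSpace ℝ (Fin d) → Matrix (Fin d) (Fin d) ℝ)
    (hDf : ∀ y, HasFDerivAt f (Matrix.toEuclideanCLM (𝕜 := ℝ) (Df y)) y)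
    (hDf_cont : Continuous Df)
    (p : EuclideanSpace ℝ (Fin d))
    (hfp : f p = 0)
    (heig : ∀ μ ∈ spectrum ℂ ((Df p).map (algebraMap ℝ ℂ)), μ.re < 0)
    (x : ℝ → EuclideanSpace ℝ (Fin d))
    (hx : ∀ t : ℝ, 0 ≤ t → HasDerivAt x (f (x t)) t)
    (hx_lim : Tendsto x atTop (𝓝 p))
    (Φ : ℝ → ℝ → (EuclideanSpace ℝ (Fin d) →L[ℝ] EuclideanSpace ℝ (Fin d)))
    (hΦ_init : ∀ s : ℝ, 0 ≤ s → Φ s s = ContinuousLinearMap.id ℝ _)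
    (hΦ_ode : ∀ s : ℝ, 0 ≤ s → ∀ t : ℝ, 0 ≤ t →
      HasDerivAt (fun τ => Φ τ s)
        ((Matrix.toEuclideanCLM (𝕜 := ℝ) (Df (x t))).comp (Φ t s)) t) :
    ∃ M > (0 : ℝ), ∀ t : ℝ, 0 ≤ t →
      (∫ s in (0 : ℝ)..t, ‖Φ t s‖) ≤ M := by
  have hlin : Continuous fun y => Matrix.toEuclideanCLM (𝕜 := ℝ) (Df y) :=
    continuous_toEuclideanCLM.comp hDf_cont
  exact stmt6_general (tendsto_exp_toEuclideanCLM_pow heig)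
    (fun t ht => (hlin.continuousAt.comp (hx t ht).continuousAt).continuousWithinAt)
    ((hlin.tendsto p).comp hx_lim) hΦ_init fun s t hs hst => hΦ_ode s hs t (hs.trans hst)
end
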